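/- arXiv:1601.08166 — 2 statements merged into one kernel-verified Lean document; each statement's English description precedes it below -/
import Mathlib

section
/- In the setting of the concave-denominator fractional program and Algorithm 1, assuming the solution set C is nonempty, the series ∑_{k≥1} θ_k ‖x^k − x^{k−1}‖² converges, and for every x̄ ∈ C the real sequence (θ_{k+1}‖x̄ − x^k‖²)_{k≥0} is convergent. -/
/-!
Each step minimizes the `2Lθ_k`-strongly convex function `f + Lθ_k ‖· - w‖²`, where `w` is the
forward gradient point, so its minimizer satisfies the three-point inequality `prox_three_point`.
Combining this with the gradient inequality for the concave `g` (`concave_le_linearization`) and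
with the descent lemma (`linearization_sub_le`) gives, for all `y ∈ S ∩ D`, with `a = x^{k-1}`,
`b = x^k` and `θ = θ_k`,
`f b - θ g b + (L/2) θ ‖b - a‖² + L θ ‖y - b‖² ≤ f y - θ g y + L θ ‖y - a‖²`.

For `y = a` the terms `f a - θ g a` vanish, and since `f b = θ_{k+1} g b` with `0 < g b ≤ M`, this
says that `θ` decreases and that `θ_k ‖x^k - x^{k-1}‖²` is at most a constant times the telescoping
difference `θ_k - θ_{k+1}`. For a solution `y = x̄` one has `f x̄ - θ g x̄ ≤ 0`, so that
`Lθ_{k+1} ‖x̄ - x^k‖² + M θ_{k+1}` is nonincreasing and nonnegative, hence convergent; as `θ`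
converges too, so does `θ_{k+1} ‖x̄ - x^k‖²`.
-/

open Filter Topology Classical

/-- If `f` is convex on `K` and `b` minimizes `f + c ‖· - w‖²` over `K`, then this function exceeds
its minimum by at least `c ‖y - b‖²` at every `y ∈ K`. -/
lemma prox_three_point {H : Type*} [NormedAddCommGroup H] [InnerProductSpace ℝ H]
    {K : Set H} {f : H → ℝ} (hf : ConvexOn ℝ K f) (c : ℝ) {b w : H} (hb : b ∈ K)
    (hmin : ∀ y ∈ K, f b + c * ‖b - w‖ ^ 2 ≤ f y + c * ‖y - w‖ ^ 2) {y : H} (hy : y ∈ K) :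
    f b + c * ‖b - w‖ ^ 2 + c * ‖y - b‖ ^ 2 ≤ f y + c * ‖y - w‖ ^ 2 := by
  -- Compare `b` with points `(1 - t) b + t y` of the segment, divide by `t` and let `t → 0`.
  have key : ∀ t ∈ Set.Ioo (0 : ℝ) 1,
      f b + c * ‖b - w‖ ^ 2 + (1 - t) * (c * ‖y - b‖ ^ 2) ≤ f y + c * ‖y - w‖ ^ 2 := by
    rintro t ⟨ht0, ht1⟩
    have h1 := hmin _ (hf.1 hb hy (by linarith : 0 ≤ 1 - t) ht0.le (by ring))
    have h2 := hf.2 hb hy (by linarith : 0 ≤ 1 - t) ht0.le (by ring)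
    have h3 : ‖(1 - t) • b + t • y - w‖ ^ 2
        = (1 - t) * ‖b - w‖ ^ 2 + t * ‖y - w‖ ^ 2 - t * (1 - t) * ‖y - b‖ ^ 2 := by
      have e1 : (1 - t) • b + t • y - w = (b - w) + t • (y - b) := by module
      have e2 : y - w = (b - w) + (y - b) := by abel
      rw [e1, e2, norm_add_sq_real, norm_add_sq_real, inner_smul_right, norm_smul, mul_pow,
        Real.norm_eq_abs, sq_abs]
      ring
    rw [h3] at h1
    simp only [smul_eq_mul] at h2
    refine le_of_mul_le_mul_left ?_ ht0
    linarith
  have hlim : Tendsto (fun t : ℝ => f b + c * ‖b - w‖ ^ 2 + (1 - t) * (c * ‖y - b‖ ^ 2))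
      (𝓝[>] 0) (𝓝 (f b + c * ‖b - w‖ ^ 2 + c * ‖y - b‖ ^ 2)) := by
    have hc : Continuous
        (fun t : ℝ => f b + c * ‖b - w‖ ^ 2 + (1 - t) * (c * ‖y - b‖ ^ 2)) := by fun_prop
    simpa using (hc.tendsto 0).mono_left nhdsWithin_le_nhds
  refine le_of_tendsto hlim ?_
  filter_upwards [Ioo_mem_nhdsGT (zero_lt_one (α := ℝ))] with t ht using key t ht

lemma hasDerivAt_comp_line {H : Type*} [NormedAddCommGroup H] [InnerProductSpace ℝ H]
    [CompleteSpace H] {g : H → ℝ} {g' : H → H} (hg : ∀ z, HasGradientAt g (g' z) z)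
    (a v : H) (t : ℝ) :
    HasDerivAt (fun s : ℝ => g (a + s • v)) (inner ℝ (g' (a + t • v)) v) t := by
  have h1 : HasDerivAt (fun s : ℝ => a + s • v) v t := by
    simpa using ((hasDerivAt_id t).smul_const v).const_add a
  exact ((hg (a + t • v)).hasFDerivAt.comp_hasDerivAt t h1).congr_deriv (by simp)

lemma concave_le_linearization {H : Type*} [NormedAddCommGroup H] [InnerProductSpace ℝ H]
    [CompleteSpace H] {g : H → ℝ} {g' : H → H} (hg : ∀ z, HasGradientAt g (g' z) z)
    (hc : ConcaveOn ℝ Set.univ g) (a y : H) :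
    g y ≤ g a + inner ℝ (g' a) (y - a) := by
  have hconc : ConcaveOn ℝ Set.univ (fun s : ℝ => g (a + s • (y - a))) := by
    refine ⟨convex_univ, fun s _ t _ α β hα hβ hαβ => ?_⟩
    have h := hc.2 (Set.mem_univ (a + s • (y - a))) (Set.mem_univ (a + t • (y - a))) hα hβ hαβ
    have e : α • (a + s • (y - a)) + β • (a + t • (y - a))
        = a + (α • s + β • t) • (y - a) := by
      obtain rfl : β = 1 - α := by linarith
      simp only [smul_eq_mul]
      module
    rwa [e] at h
  have h := hconc.slope_le_of_hasDerivAt (Set.mem_univ 0) (Set.mem_univ 1) zero_lt_one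
    (hasDerivAt_comp_line hg a (y - a) 0)
  simp [slope_def_field] at h
  linarith

/-- The descent lemma, as a lower bound for a function with `L`-Lipschitz gradient. -/
lemma linearization_sub_le {H : Type*} [NormedAddCommGroup H] [InnerProductSpace ℝ H]
    [CompleteSpace H] {g : H → ℝ} {g' : H → H} (hg : ∀ z, HasGradientAt g (g' z) z)
    {L : ℝ} (hlip : ∀ u v, ‖g' u - g' v‖ ≤ L * ‖u - v‖) (a b : H) :
    g a + inner ℝ (g' a) (b - a) - L / 2 * ‖b - a‖ ^ 2 ≤ g b := by
  have hd := hasDerivAt_comp_line hg a (b - a)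
  -- Compare `-g` with the quadratic bound along the segment from `a` to `b`.
  have hB : ∀ t : ℝ, HasDerivAt
      (fun s : ℝ => -g a - s * inner ℝ (g' a) (b - a) + L / 2 * ‖b - a‖ ^ 2 * s ^ 2)
      (-inner ℝ (g' a) (b - a) + L * ‖b - a‖ ^ 2 * t) t := by
    intro t
    have h1 := ((hasDerivAt_id t).mul_const (inner ℝ (g' a) (b - a))).const_sub (-g a)
    have h2 := (hasDerivAt_pow 2 t).const_mul (L / 2 * ‖b - a‖ ^ 2)
    refine (h1.add h2).congr_deriv ?_
    push_cast
    ring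
  have h := image_le_of_deriv_right_le_deriv_boundary (a := 0) (b := 1)
    (f := fun s : ℝ => -g (a + s • (b - a)))
    (f' := fun s : ℝ => -inner ℝ (g' (a + s • (b - a))) (b - a))
    (fun t _ => (hd t).neg.continuousAt.continuousWithinAt)
    (fun t _ => (hd t).neg.hasDerivWithinAt) (by simp)
    (fun t _ => (hB t).continuousAt.continuousWithinAt)
    (fun t _ => (hB t).hasDerivWithinAt)
    (by
      rintro t ⟨ht, -⟩
      have h1 : -inner ℝ (g' (a + t • (b - a)) - g' a) (b - a)
          ≤ ‖g' (a + t • (b - a)) - g' a‖ * ‖b - a‖ :=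
        (neg_le_abs _).trans (abs_real_inner_le_norm _ _)
      have h2 := hlip (a + t • (b - a)) a
      rw [add_sub_cancel_left, norm_smul, Real.norm_of_nonneg ht] at h2
      have h3 := mul_le_mul_of_nonneg_right h2 (norm_nonneg (b - a))
      rw [inner_sub_left] at h1
      linarith)
    (Set.right_mem_Icc.2 zero_le_one)
  simp at h
  linarith

/-- For Algorithm 1 (concave denominator), with nonempty solution set `C`:
`∑_{k≥1} θ_k ‖x^k − x^{k−1}‖²` converges and for every `x̄ ∈ C` the sequence
`(θ_{k+1}‖x̄ − x^k‖²)_{k≥0}` converges. -/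
theorem algorithm1_summability
    {H : Type*} [NormedAddCommGroup H] [InnerProductSpace ℝ H] [CompleteSpace H]
    (S : Set H) (hS_ne : S.Nonempty) (hS_conv : Convex ℝ S) (hS_closed : IsClosed S)
    -- f : H → ℝ ∪ {+∞} is encoded via its (nonempty) effective domain D and real values f on D
    (f : H → ℝ) (D : Set H) (hf_proper : D.Nonempty)
    (hf_convex : ConvexOn ℝ D f)
    (hf_lsc : LowerSemicontinuous fun z => if z ∈ D then ((f z : ℝ) : EReal) else ⊤)
    (hDS : (D ∩ S).Nonempty)
    (hf_nonneg : ∀ z ∈ S ∩ D, 0 ≤ f z)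
    (g : H → ℝ) (g' : H → H)
    (hg_grad : ∀ z, HasGradientAt g (g' z) z)
    (hg_concave : ConcaveOn ℝ Set.univ g)
    (L : ℝ) (hL : 0 < L)
    (hg_lip : LipschitzWith (Real.toNNReal L) g')
    (M : ℝ) (hM : 0 < M)
    (hg_pos : ∀ z ∈ S, 0 < g z) (hg_le : ∀ z ∈ S, g z ≤ M)
    -- Algorithm 1: sequences x, θ, η (θ_{k+1} = f(x^k)/g(x^k) for k ≥ 0, η_k = 1/(2Lθ_k) for k ≥ 1)
    (x : ℕ → H) (θ η : ℕ → ℝ)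
    (hx0 : x 0 ∈ S ∩ D)
    (hθ : ∀ k : ℕ, θ (k + 1) = f (x k) / g (x k))
    (hη : ∀ k : ℕ, η (k + 1) = 1 / (2 * L * θ (k + 1)))
    -- x^{k+1} is the minimizer over S of y ↦ f(y) + (1/(2η_{k+1}))‖y − (x^k + θ_{k+1}η_{k+1}∇g(x^k))‖²
    (hstep : ∀ k : ℕ, x (k + 1) ∈ S ∩ D ∧ ∀ y ∈ S ∩ D,
      f (x (k + 1)) + 1 / (2 * η (k + 1)) *
          ‖x (k + 1) - (x k + (θ (k + 1) * η (k + 1)) • g' (x k))‖ ^ 2 ≤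
        f y + 1 / (2 * η (k + 1)) * ‖y - (x k + (θ (k + 1) * η (k + 1)) • g' (x k))‖ ^ 2)
    -- θ̄ = inf_{z ∈ S} f(z)/g(z) and the solution set C = {z ∈ S : f(z)/g(z) = θ̄} is nonempty
    (θbar : ℝ) (hθbar : IsGLB ((fun z => f z / g z) '' (S ∩ D)) θbar)
    (hC_ne : ∃ xb ∈ S ∩ D, f xb / g xb = θbar)
    :
    (Summable fun k : ℕ => θ (k + 1) * ‖x (k + 1) - x k‖ ^ 2) ∧
      ∀ xb, xb ∈ S ∩ D → f xb / g xb = θbar →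
        ∃ l : ℝ, Tendsto (fun k : ℕ => θ (k + 1) * ‖xb - x k‖ ^ 2) atTop (𝓝 l) := by
  have hlip : ∀ u v, ‖g' u - g' v‖ ≤ L * ‖u - v‖ := fun u v => by
    simpa [Real.coe_toNNReal L hL.le] using hg_lip.norm_sub_le u v
  have hx : ∀ k, x k ∈ S ∩ D := fun k => by
    cases k with
    | zero => exact hx0
    | succ k => exact (hstep k).1
  have hgx : ∀ k, 0 < g (x k) := fun k => hg_pos _ (hx k).1
  have hθ0 : ∀ k, 0 ≤ θ (k + 1) := fun k => by
    rw [hθ]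
    exact div_nonneg (hf_nonneg _ (hx k)) (hgx k).le
  have hfx : ∀ k, f (x k) = θ (k + 1) * g (x k) := fun k => by
    rw [hθ, div_mul_cancel₀ _ (hgx k).ne']
  have hconv : ConvexOn ℝ (S ∩ D) f :=
    hf_convex.subset Set.inter_subset_right (hS_conv.inter hf_convex.1)
  have main : ∀ k, ∀ y ∈ S ∩ D,
      f (x (k + 1)) - θ (k + 1) * g (x (k + 1)) + L / 2 * θ (k + 1) * ‖x (k + 1) - x k‖ ^ 2
        + L * θ (k + 1) * ‖y - x (k + 1)‖ ^ 2
      ≤ f y - θ (k + 1) * g y + L * θ (k + 1) * ‖y - x k‖ ^ 2 := by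
    intro k y hy
    have hp := prox_three_point hconv _ (hstep k).1 (hstep k).2 hy
    -- Both identities survive `θ = 0`, where `η = 1 / 0 = 0` and the step minimizes `f` alone.
    have hc : 1 / (2 * η (k + 1)) = L * θ (k + 1) := by
      rw [hη]
      rcases eq_or_ne (θ (k + 1)) 0 with h | h
      · simp [h]
      · field_simp
    have hs : L * θ (k + 1) * (θ (k + 1) * η (k + 1)) = θ (k + 1) / 2 := by
      rw [hη]
      rcases eq_or_ne (θ (k + 1)) 0 with h | h
      · simp [h]
      · field_simp
    rw [hc] at hp
    generalize θ (k + 1) * η (k + 1) = s at hp hs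
    have expand : ∀ u : H, L * θ (k + 1) * ‖u - (x k + s • g' (x k))‖ ^ 2
        = L * θ (k + 1) * ‖u - x k‖ ^ 2 - θ (k + 1) * inner ℝ (g' (x k)) (u - x k)
          + L * θ (k + 1) * ‖s • g' (x k)‖ ^ 2 := by
      intro u
      rw [← sub_sub, norm_sub_sq_real, inner_smul_right, real_inner_comm]
      linear_combination (-2 * inner ℝ (g' (x k)) (u - x k)) * hs
    rw [expand, expand] at hp
    have h1 := mul_le_mul_of_nonneg_left
      (concave_le_linearization hg_grad hg_concave (x k) y) (hθ0 k)
    have h2 := mul_le_mul_of_nonneg_left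
      (linearization_sub_le hg_grad hlip (x k) (x (k + 1))) (hθ0 k)
    linarith
  have hself : ∀ k, 3 / 2 * L * (θ (k + 1) * ‖x (k + 1) - x k‖ ^ 2)
      ≤ (θ (k + 1) - θ (k + 2)) * g (x (k + 1)) := by
    intro k
    have h := main k (x k) (hx k)
    rw [hfx k, hfx (k + 1), norm_sub_rev (x k)] at h
    simp only [sub_self, norm_zero] at h
    linarith
  have hnn : ∀ k, 0 ≤ θ (k + 1) * ‖x (k + 1) - x k‖ ^ 2 := fun k =>
    mul_nonneg (hθ0 k) (sq_nonneg _)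
  have hdec : ∀ k, θ (k + 2) ≤ θ (k + 1) := by
    intro k
    have h : 0 ≤ (θ (k + 1) - θ (k + 2)) * g (x (k + 1)) :=
      (mul_nonneg (by positivity) (hnn k)).trans (hself k)
    linarith [nonneg_of_mul_nonneg_left h (hgx (k + 1))]
  have hM' : ∀ k, (θ (k + 1) - θ (k + 2)) * g (x (k + 1)) ≤ (θ (k + 1) - θ (k + 2)) * M :=
    fun k => mul_le_mul_of_nonneg_left (hg_le _ (hx (k + 1)).1) (by linarith [hdec k])
  -- A nonincreasing nonnegative sequence converges.
  have conv : ∀ u : ℕ → ℝ, (∀ k, 0 ≤ u k) → (∀ k, u (k + 1) ≤ u k) →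
      ∃ l : ℝ, Tendsto u atTop (𝓝 l) := fun u h0 h1 =>
    ⟨_, tendsto_atTop_ciInf (antitone_nat_of_succ_le h1)
      ⟨0, by rintro _ ⟨k, rfl⟩; exact h0 k⟩⟩
  refine ⟨?_, fun xb hxb hxbθ => ?_⟩
  · have hsum : Summable fun k => 3 / 2 * L * (θ (k + 1) * ‖x (k + 1) - x k‖ ^ 2) := by
      refine summable_of_sum_range_le (c := θ 1 * M)
        (fun k => mul_nonneg (by positivity) (hnn k)) fun n => ?_
      have htel : ∑ k ∈ Finset.range n, (θ (k + 1) - θ (k + 2)) * M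
          = (θ 1 - θ (n + 1)) * M := by
        rw [← Finset.sum_mul, Finset.sum_range_sub' fun k => θ (k + 1)]
      have h := Finset.sum_le_sum fun k (_ : k ∈ Finset.range n) => (hself k).trans (hM' k)
      rw [htel] at h
      linarith [mul_nonneg (hθ0 n) hM.le]
    exact (summable_mul_left_iff (by positivity)).1 hsum
  · have hgb : 0 < g xb := hg_pos _ hxb.1
    have hopt : ∀ k, f xb - θ (k + 1) * g xb ≤ 0 := by
      intro k
      have h : θbar ≤ θ (k + 1) := by
        rw [hθ]
        exact hθbar.1 ⟨x k, hx k, rfl⟩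
      rw [← hxbθ, div_le_iff₀ hgb] at h
      linarith
    obtain ⟨l₁, h₁⟩ := conv (fun k => θ (k + 1)) hθ0 hdec
    obtain ⟨l₂, h₂⟩ := conv (fun k => L * (θ (k + 1) * ‖xb - x k‖ ^ 2) + M * θ (k + 1))
      (fun k => add_nonneg (mul_nonneg hL.le (mul_nonneg (hθ0 k) (sq_nonneg _)))
        (mul_nonneg hM.le (hθ0 k)))
      (fun k => by
        have h := main k xb hxb
        rw [hfx (k + 1)] at h
        have h3 := mul_le_mul_of_nonneg_left (mul_le_mul_of_nonneg_right (hdec k)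
          (sq_nonneg ‖xb - x (k + 1)‖)) hL.le
        have h4 := mul_nonneg (by positivity : 0 ≤ L / 2) (hnn k)
        have h5 := hopt k
        have h6 := hM' k
        simp only [add_assoc, Nat.reduceAdd] at *
        linarith)
    refine ⟨(l₂ - M * l₁) / L, ((h₂.sub (h₁.const_mul M)).div_const L).congr fun k => ?_⟩
    field_simp
    ring
end

section
/- In the setting of the convex-denominator fractional program and Algorithm 2, with step sizes satisfying liminf_{k→∞} η_k > 0, if the sequence (x^k)_{k≥0} converges strongly to x̄, then x̄ ∈ dom f ∩ S, f(x^k) → f(x̄), g(x^k) → g(x̄), and the sequence (θ_k)_{k≥1} converges to f(x̄)/g(x̄). -/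
/-!
Since `x (k+1)` does at least as well as `y = x k` in the proximal subproblem, the gradient
inequality for the convex `g` gives `f (x (k+1)) ≤ θ (k+1) * g (x (k+1))`, so the nonnegative ratios
`θ` decrease to some `t`, and hence `f (x k) = θ (k+1) * g (x k)` tends to `t * g xbar`. Lower
semicontinuity then gives `xbar ∈ D` and `f xbar ≤ t * g xbar`. Testing the subproblem
with `y = xbar`, which is now admissible, gives
`f (x (k+1)) ≤ f xbar + ‖xbar - x k‖² / (2 η (k+1)) + θ (k+1) ⟪g' (x k), x (k+1) - xbar⟫`; as `η` is
bounded away from zero the error terms vanish, so `t * g xbar ≤ f xbar`.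
-/

open Filter Topology Classical

/-- The gradient inequality for a convex function, obtained from the one-dimensional slope
inequality along the line through `a` and `b`. -/
lemma gradient_ineq {H : Type*} [NormedAddCommGroup H] [InnerProductSpace ℝ H] [CompleteSpace H]
    {g : H → ℝ} {v a : H} (hg : ConvexOn ℝ Set.univ g) (hv : HasGradientAt g v a) (b : H) :
    g a + inner ℝ v (b - a) ≤ g b := by
  have hline : ConvexOn ℝ Set.univ (g ∘ (AffineMap.lineMap a b : ℝ →ᵃ[ℝ] H)) := by
    simpa using hg.comp_affineMap (AffineMap.lineMap a b : ℝ →ᵃ[ℝ] H)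
  have hderiv : HasDerivAt (g ∘ (AffineMap.lineMap a b : ℝ →ᵃ[ℝ] H)) (inner ℝ v (b - a)) 0 := by
    have h1 : HasDerivAt (AffineMap.lineMap a b : ℝ → H) (b - a) 0 :=
      AffineMap.hasDerivAt_lineMap
    have h2 := hv.hasFDerivAt
    rw [← AffineMap.lineMap_apply_zero (k := ℝ) a b] at h2
    simpa using h2.comp_hasDerivAt (0 : ℝ) h1
  have h := hline.le_slope_of_hasDerivAt (Set.mem_univ 0) (Set.mem_univ 1) one_pos hderiv
  simp only [slope_def_field, Function.comp_apply, AffineMap.lineMap_apply_one,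
    AffineMap.lineMap_apply_zero, sub_zero, div_one] at h
  linarith

/-- Completing the square: the proximal term splits into a quadratic, a linear, and a constant
part that does not depend on `y`. -/
lemma prox_term_expand {H : Type*} [NormedAddCommGroup H] [InnerProductSpace ℝ H]
    {η : ℝ} (hη : 0 < η) (t : ℝ) (p v y : H) :
    1 / (2 * η) * ‖y - (p + (t * η) • v)‖ ^ 2 =
      1 / (2 * η) * ‖y - p‖ ^ 2 - t * inner ℝ v (y - p) + t ^ 2 * η / 2 * ‖v‖ ^ 2 := by
  rw [← sub_sub, norm_sub_sq_real, inner_smul_right, norm_smul, mul_pow, Real.norm_eq_abs, sq_abs,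
    real_inner_comm]
  field_simp

/-- Lower semicontinuity of the extension of `f` by `⊤` off `D`: a finite limit `L` of the values
along `x` forces the extension to be at most `L`, hence finite, at `xbar`. -/
lemma lsc_limit {H : Type*} [TopologicalSpace H] {f : H → ℝ} {D : Set H}
    (hf : LowerSemicontinuous fun z => if z ∈ D then ((f z : ℝ) : EReal) else ⊤)
    {x : ℕ → H} {xbar : H} (hx : Tendsto x atTop (𝓝 xbar)) (hxD : ∀ k, x k ∈ D) {L : ℝ}
    (hL : Tendsto (fun k => f (x k)) atTop (𝓝 L)) : xbar ∈ D ∧ f xbar ≤ L := by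
  have key : (if xbar ∈ D then ((f xbar : ℝ) : EReal) else ⊤) ≤ (L : EReal) := by
    by_contra! hlt
    obtain ⟨r, hLr, hr⟩ := EReal.lt_iff_exists_real_btwn.1 hlt
    have hev := hx.eventually (hf xbar r hr)
    have hrL : r ≤ L := by
      refine ge_of_tendsto hL ?_
      filter_upwards [hev] with k hk
      rw [if_pos (hxD k)] at hk
      exact (EReal.coe_lt_coe_iff.1 hk).le
    exact absurd (EReal.coe_lt_coe_iff.1 hLr) (not_lt.2 hrL)
  by_cases hD : xbar ∈ D
  · rw [if_pos hD] at key
    exact ⟨hD, EReal.coe_le_coe_iff.1 key⟩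
  · rw [if_neg hD] at key
    exact absurd key (not_le.2 (EReal.coe_lt_top L))

/-- Theorem 9 (ii), first part: for Algorithm 2 (convex denominator) with `liminf η_k > 0`,
if `x^k → x̄` strongly then `x̄ ∈ dom f ∩ S`, `f(x^k) → f(x̄)`, `g(x^k) → g(x̄)` and
`θ_k → f(x̄)/g(x̄)`. -/
theorem algorithm2_limit_point
    {H : Type*} [NormedAddCommGroup H] [InnerProductSpace ℝ H] [CompleteSpace H]
    (S : Set H) (hS_ne : S.Nonempty) (hS_conv : Convex ℝ S) (hS_closed : IsClosed S)
    -- f : H → ℝ ∪ {+∞} is encoded via its (nonempty) effective domain D and real values f on D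
    (f : H → ℝ) (D : Set H) (hf_proper : D.Nonempty)
    (hf_convex : ConvexOn ℝ D f)
    (hf_lsc : LowerSemicontinuous fun z => if z ∈ D then ((f z : ℝ) : EReal) else ⊤)
    (hDS : (D ∩ S).Nonempty)
    (hf_nonneg : ∀ z ∈ S ∩ D, 0 ≤ f z)
    (g : H → ℝ) (g' : H → H)
    (hg_grad : ∀ z, HasGradientAt g (g' z) z)
    (hg'_cont : Continuous g')
    (hg_convex : ConvexOn ℝ Set.univ g)
    (M : ℝ) (hM : 0 < M)
    (hg_pos : ∀ z ∈ S, 0 < g z) (hg_le : ∀ z ∈ S, g z ≤ M)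
    -- Algorithm 2: sequences x, θ and chosen step sizes η_k > 0
    (x : ℕ → H) (θ η : ℕ → ℝ)
    (hx0 : x 0 ∈ S ∩ D)
    (hθ : ∀ k : ℕ, θ (k + 1) = f (x k) / g (x k))
    (hη_pos : ∀ k : ℕ, 0 < η (k + 1))
    -- x^{k+1} is the minimizer over S of y ↦ f(y) + (1/(2η_{k+1}))‖y − (x^k + θ_{k+1}η_{k+1}∇g(x^k))‖²
    (hstep : ∀ k : ℕ, x (k + 1) ∈ S ∩ D ∧ ∀ y ∈ S ∩ D,
      f (x (k + 1)) + 1 / (2 * η (k + 1)) *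
          ‖x (k + 1) - (x k + (θ (k + 1) * η (k + 1)) • g' (x k))‖ ^ 2 ≤
        f y + 1 / (2 * η (k + 1)) * ‖y - (x k + (θ (k + 1) * η (k + 1)) • g' (x k))‖ ^ 2)
    -- liminf_{k→∞} η_k > 0
    (hη_liminf : ∃ c : ℝ, 0 < c ∧ ∀ᶠ k in atTop, c ≤ η k)
    (xbar : H) (hconv : Tendsto x atTop (𝓝 xbar)) :
    xbar ∈ D ∩ S ∧
      Tendsto (fun k : ℕ => f (x k)) atTop (𝓝 (f xbar)) ∧
      Tendsto (fun k : ℕ => g (x k)) atTop (𝓝 (g xbar)) ∧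
      Tendsto (fun k : ℕ => θ (k + 1)) atTop (𝓝 (f xbar / g xbar)) := by
  have hxSD : ∀ k, x k ∈ S ∩ D := fun k => by
    cases k with
    | zero => exact hx0
    | succ k => exact (hstep k).1
  have hgx : ∀ k, 0 < g (x k) := fun k => hg_pos _ (hxSD k).1
  have hxS : xbar ∈ S := hS_closed.mem_of_tendsto hconv (Eventually.of_forall fun k => (hxSD k).1)
  have hgbar : 0 < g xbar := hg_pos _ hxS
  have hθ_nonneg : ∀ k, 0 ≤ θ (k + 1) := fun k => by
    rw [hθ]
    exact div_nonneg (hf_nonneg _ (hxSD k)) (hgx k).le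
  have hfθ : ∀ k, f (x k) = θ (k + 1) * g (x k) := fun k => by
    rw [hθ, div_mul_cancel₀ _ (hgx k).ne']
  have hmin : ∀ k, ∀ y ∈ S ∩ D,
      f (x (k + 1)) + 1 / (2 * η (k + 1)) * ‖x (k + 1) - x k‖ ^ 2
          - θ (k + 1) * inner ℝ (g' (x k)) (x (k + 1) - x k) ≤
        f y + 1 / (2 * η (k + 1)) * ‖y - x k‖ ^ 2
          - θ (k + 1) * inner ℝ (g' (x k)) (y - x k) := fun k y hy => by
    have h := (hstep k).2 y hy
    rw [prox_term_expand (hη_pos k), prox_term_expand (hη_pos k)] at h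
    linarith
  have hquad : ∀ k, 0 ≤ 1 / (2 * η (k + 1)) * ‖x (k + 1) - x k‖ ^ 2 := fun k => by
    have := hη_pos k
    positivity
  have hanti : Antitone fun k => θ (k + 1) := by
    refine antitone_nat_of_succ_le fun k => ?_
    -- The previous iterate `x k` is itself a competitor in the subproblem defining `x (k+1)`.
    have h1 := hmin k (x k) (hxSD k)
    have h2 := mul_le_mul_of_nonneg_left
      (gradient_ineq hg_convex (hg_grad (x k)) (x (k + 1))) (hθ_nonneg k)
    simp only [sub_self, norm_zero, inner_zero_right] at h1
    rw [hθ (k + 1), div_le_iff₀ (hgx (k + 1))]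
    linarith [hquad k, hfθ k]
  obtain ⟨t, ht⟩ : ∃ t, Tendsto (fun k => θ (k + 1)) atTop (𝓝 t) :=
    ⟨_, tendsto_atTop_ciInf hanti ⟨0, by rintro _ ⟨k, rfl⟩; exact hθ_nonneg k⟩⟩
  have hg_lim : Tendsto (fun k => g (x k)) atTop (𝓝 (g xbar)) :=
    (hg_grad xbar).continuousAt.tendsto.comp hconv
  have hf_lim : Tendsto (fun k => f (x k)) atTop (𝓝 (t * g xbar)) := by
    simpa only [hfθ] using ht.mul hg_lim
  obtain ⟨hxD, hle⟩ := lsc_limit hf_lsc hconv (fun k => (hxSD k).2) hf_lim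
  have hconv1 : Tendsto (fun k => x (k + 1)) atTop (𝓝 xbar) :=
    hconv.comp (tendsto_add_atTop_nat 1)
  have hge : t * g xbar ≤ f xbar := by
    obtain ⟨c, hc, hηc⟩ := hη_liminf
    have hbound : Tendsto (fun k => f xbar + 1 / (2 * c) * ‖xbar - x k‖ ^ 2
        + θ (k + 1) * inner ℝ (g' (x k)) (x (k + 1) - xbar)) atTop (𝓝 (f xbar)) := by
      have h1 : Tendsto (fun k => ‖xbar - x k‖ ^ 2) atTop (𝓝 (‖xbar - xbar‖ ^ 2)) :=
        (tendsto_const_nhds.sub hconv).norm.pow 2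
      have h2 : Tendsto (fun k => inner ℝ (g' (x k)) (x (k + 1) - xbar)) atTop
          (𝓝 (inner ℝ (g' xbar) (xbar - xbar))) :=
        ((hg'_cont.tendsto xbar).comp hconv).inner (hconv1.sub tendsto_const_nhds)
      simpa using ((h1.const_mul (1 / (2 * c))).const_add (f xbar)).add (ht.mul h2)
    refine le_of_tendsto_of_tendsto (hf_lim.comp (tendsto_add_atTop_nat 1)) hbound ?_
    filter_upwards [(tendsto_add_atTop_nat 1).eventually hηc] with k hk
    have h1 := hmin k xbar ⟨hxS, hxD⟩
    have h2 : 1 / (2 * η (k + 1)) * ‖xbar - x k‖ ^ 2 ≤ 1 / (2 * c) * ‖xbar - x k‖ ^ 2 := by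
      gcongr
    have h3 : inner ℝ (g' (x k)) (x (k + 1) - xbar) =
        inner ℝ (g' (x k)) (x (k + 1) - x k) - inner ℝ (g' (x k)) (xbar - x k) := by
      rw [← inner_sub_right, sub_sub_sub_cancel_right]
    simp only [Function.comp_apply]
    rw [h3, mul_sub]
    linarith [hquad k]
  have hval : f xbar = t * g xbar := le_antisymm hle hge
  refine ⟨⟨hxD, hxS⟩, hval ▸ hf_lim, hg_lim, ?_⟩
  rwa [hval, mul_div_cancel_right₀ _ hgbar.ne']
end
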